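/- The regularized integral equation has a unique solution: the map F : C([0,a]; ℓ²) → C([0,a]; ℓ²) has exactly one fixed point, i.e. there is a unique u ∈ C([0,a]; ℓ²) such that for all t ∈ [0,a] and all p ≥ 1, u(t)_p = 0 when λ_p > B, and u(t)_p = E_{β,1}(λ_p t^β) c⁰_p + t E_{β,2}(λ_p t^β) c¹_p + ∫_0^t (t−η)^{β−1} E_{β,β}(λ_p (t−η)^β) G(η, u(η))_p dη when λ_p ≤ B. -/

import Mathlib

/-!
Only finitely many coordinates `p` satisfy `lam p ≤ B`, and for each of them the kernel
`s ↦ s ^ (β - 1) * E_{β,β}(lam p * s ^ β)` is continuous on `[0, a]`, hence bounded there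
(`continuousOn_kernel`). Together with the Lipschitz condition on `G`, this gives the Volterra
estimate `‖F u t - F w t‖ ≤ C * ∫_0^t ‖u - w‖`. Iterating it gives
`‖F^[n] u - F^[n] w‖ ≤ (C a)^n / n! * ‖u - w‖`, so some iterate of `F` is a contraction of the
complete space `C([0,a]; ℓ²)`, and the Banach fixed point theorem applies
(`existsUnique_fixedPoint_of_volterra`).
-/

open Real MeasureTheory

/-- The Mittag-Leffler function `E_{β,γ}(z) = ∑_{k=0}^∞ z^k / Γ(βk + γ)` for real `z`. -/
noncomputable def mittagLeffler (β γ z : ℝ) : ℝ :=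
  ∑' k : ℕ, z ^ k / Real.Gamma (β * k + γ)

/-- On `[0, R]` the Mittag-Leffler series is dominated by a multiple of the exponential series,
because `Γ(βk + β) ≥ Γ(k + 1) = k!` for `k ≥ 1` (`Γ` increases on `[2, ∞)`). -/
lemma continuousOn_mittagLeffler {β : ℝ} (hβ : 1 < β) (R : ℝ) :
    ContinuousOn (mittagLeffler β β) (Set.Icc 0 R) := by
  have hG : 0 < Real.Gamma β := Real.Gamma_pos_of_pos (by linarith)
  unfold mittagLeffler
  -- The `k = 0` term equals `1 / Γ(β)`, which may exceed `1`; hence the extra constant.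
  refine continuousOn_tsum (u := fun k : ℕ => (1 + 1 / Real.Gamma β) * (R ^ k / (k.factorial : ℝ)))
    (fun k => by fun_prop) ((Real.summable_pow_div_factorial R).mul_left _) ?_
  intro k x hx
  have hR : 0 ≤ R := hx.1.trans hx.2
  have hpos : 0 < Real.Gamma (β * k + β) := Real.Gamma_pos_of_pos (by positivity)
  rw [Real.norm_of_nonneg (div_nonneg (pow_nonneg hx.1 k) hpos.le)]
  have hxk : x ^ k ≤ R ^ k := pow_le_pow_left₀ hx.1 hx.2 k
  rcases Nat.eq_zero_or_pos k with rfl | hk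
  · simp
  · have hk1 : (1 : ℝ) ≤ k := by exact_mod_cast hk
    have hle : (k.factorial : ℝ) ≤ Real.Gamma (β * k + β) := by
      rw [← Real.Gamma_nat_eq_factorial]
      exact Real.Gamma_strictMonoOn_Ici.monotoneOn (by simp; linarith)
        (by simp; nlinarith) (by nlinarith)
    have hf : (0 : ℝ) < k.factorial := by exact_mod_cast k.factorial_pos
    calc x ^ k / Real.Gamma (β * k + β) ≤ R ^ k / k.factorial :=
          div_le_div₀ (pow_nonneg hR k) hxk hf hle
      _ ≤ (1 + 1 / Real.Gamma β) * (R ^ k / (k.factorial : ℝ)) := by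
          refine le_mul_of_one_le_left (by positivity) ?_
          have : 0 < 1 / Real.Gamma β := by positivity
          linarith

lemma continuousOn_kernel {β l : ℝ} (hβ : 1 < β) (hl : 0 < l) (a : ℝ) :
    ContinuousOn (fun s : ℝ => s ^ (β - 1) * mittagLeffler β β (l * s ^ β)) (Set.Icc 0 a) := by
  refine ContinuousOn.mul
    (fun s _ => (Real.continuousAt_rpow_const s _ (Or.inr (by linarith))).continuousWithinAt) ?_
  refine (continuousOn_mittagLeffler hβ (l * a ^ β)).comp (f := fun s : ℝ => l * s ^ β)
    (fun s _ => ((Real.continuousAt_rpow_const s _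
      (Or.inr (by linarith))).const_mul l).continuousWithinAt) ?_
  intro s hs
  have h0 : 0 ≤ s ^ β := Real.rpow_nonneg hs.1 β
  exact ⟨by positivity, mul_le_mul_of_nonneg_left
    (Real.rpow_le_rpow hs.1 hs.2 (by linarith)) hl.le⟩

/-- A self-map of `C([0,a]; E)` of Volterra type has exactly one fixed point: its iterates are
Lipschitz with constants `(C a)^n / n!`, and these tend to `0`. -/
lemma existsUnique_fixedPoint_of_volterra {E : Type*} [NormedAddCommGroup E] [CompleteSpace E]
    {a C : ℝ} (ha : 0 < a) (hC : 0 ≤ C)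
    (F : C(Set.Icc (0 : ℝ) a, E) → C(Set.Icc (0 : ℝ) a, E))
    (hF : ∀ u w : C(Set.Icc (0 : ℝ) a, E), ∀ t : Set.Icc (0 : ℝ) a,
      ‖F u t - F w t‖ ≤ C * ∫ η in (0 : ℝ)..(t : ℝ),
        ‖u (Set.projIcc 0 a ha.le η) - w (Set.projIcc 0 a ha.le η)‖) :
    ∃! u : C(Set.Icc (0 : ℝ) a, E), F u = u := by
  have hiter : ∀ n : ℕ, ∀ u w : C(Set.Icc (0 : ℝ) a, E), ∀ t : Set.Icc (0 : ℝ) a,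
      ‖F^[n] u t - F^[n] w t‖ ≤ (C * t) ^ n / n.factorial * dist u w := by
    intro n
    induction n with
    | zero =>
      intro u w t
      simpa [dist_eq_norm] using ContinuousMap.dist_apply_le_dist (f := u) (g := w) t
    | succ n ih =>
      intro u w t
      rw [Function.iterate_succ_apply', Function.iterate_succ_apply']
      refine (hF _ _ t).trans ?_
      have hint : (∫ η in (0 : ℝ)..(t : ℝ),
          ‖F^[n] u (Set.projIcc 0 a ha.le η) - F^[n] w (Set.projIcc 0 a ha.le η)‖) ≤
          ∫ η in (0 : ℝ)..(t : ℝ), (C ^ n / n.factorial * dist u w) * η ^ n := by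
        refine intervalIntegral.integral_mono_on t.2.1 ?_ ?_ ?_
        · refine Continuous.intervalIntegrable ?_ _ _
          have hp : Continuous (Set.projIcc 0 a ha.le) := continuous_projIcc
          exact (((F^[n] u).continuous.comp hp).sub ((F^[n] w).continuous.comp hp)).norm
        · exact Continuous.intervalIntegrable (by fun_prop) _ _
        · intro η hη
          have h := ih u w (Set.projIcc 0 a ha.le η)
          rw [Set.projIcc_of_mem ha.le ⟨hη.1, hη.2.trans t.2.2⟩] at h ⊢
          refine h.trans (le_of_eq ?_)
          rw [mul_pow]; ring
      refine (mul_le_mul_of_nonneg_left hint hC).trans (le_of_eq ?_)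
      rw [intervalIntegral.integral_const_mul, integral_pow, Nat.factorial_succ, mul_pow]
      push_cast
      have : (n.factorial : ℝ) ≠ 0 := by exact_mod_cast n.factorial_ne_zero
      field_simp
      simp
      ring
  obtain ⟨n, hn⟩ := ((FloorSemiring.tendsto_pow_div_factorial_atTop (C * a)).eventually
    (gt_mem_nhds (show (0 : ℝ) < 1 by norm_num))).exists
  have hr0 : 0 ≤ (C * a) ^ n / n.factorial := by positivity
  have hcontr : ContractingWith ⟨(C * a) ^ n / n.factorial, hr0⟩ F^[n] := by
    refine ⟨by exact_mod_cast hn, LipschitzWith.of_dist_le_mul fun u w => ?_⟩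
    refine (ContinuousMap.dist_le (by positivity)).2 fun t => ?_
    rw [dist_eq_norm]
    refine (hiter n u w t).trans ?_
    have ht0 : (0 : ℝ) ≤ t := t.2.1
    have hta : (t : ℝ) ≤ a := t.2.2
    have : (C * t) ^ n / n.factorial ≤ (C * a) ^ n / n.factorial := by gcongr
    exact mul_le_mul_of_nonneg_right this dist_nonneg
  have : Nonempty C(Set.Icc (0 : ℝ) a, E) := ⟨0⟩
  refine ⟨_, hcontr.isFixedPt_fixedPoint_iterate, fun w hw => ?_⟩
  exact hcontr.fixedPoint_unique (Function.IsFixedPt.iterate hw n)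

/-- A square-summable sequence supported in a finite set has `ℓ²` norm at most its `ℓ¹` norm. -/
lemma lp_norm_le_sum_of_support (x : lp (fun _ : ℕ+ => ℝ) 2) (S : Finset ℕ+)
    (hx : ∀ p ∉ S, x p = 0) : ‖x‖ ≤ ∑ p ∈ S, ‖x p‖ := by
  have h : x = ∑ p ∈ S, lp.single 2 p (x p) := by
    ext q
    rw [lp.coeFn_sum, Finset.sum_apply]
    by_cases hq : q ∈ S
    · rw [Finset.sum_eq_single_of_mem q hq]
      · simp
      · intro p _ hp
        simp [lp.single_apply, hp.symm]
    · rw [hx q hq, Finset.sum_eq_zero]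
      intro p hp
      have : q ≠ p := fun h => hq (h ▸ hp)
      simp [lp.single_apply, this]
  calc ‖x‖ = ‖∑ p ∈ S, lp.single 2 p (x p)‖ := by rw [← h]
    _ ≤ ∑ p ∈ S, ‖lp.single (E := fun _ : ℕ+ => ℝ) 2 p (x p)‖ := norm_sum_le _ _
    _ = ∑ p ∈ S, ‖x p‖ := Finset.sum_congr rfl fun p _ => lp.norm_single (by norm_num) _ _

/-- the regularized (Fourier-truncated) integral equation has a unique
solution: the map `F : C([0,a];ℓ²) → C([0,a];ℓ²)` defined coordinatewise by
`F(v)(t)_p = 0` for `λ_p > B` and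
`F(v)(t)_p = E_{β,1}(λ_p t^β) c⁰_p + t E_{β,2}(λ_p t^β) c¹_p
  + ∫_0^t (t−η)^{β−1} E_{β,β}(λ_p (t−η)^β) G(η, v(η))_p dη` for `λ_p ≤ B`
has exactly one fixed point. -/
theorem regularized_equation_unique_solution
    (lam : ℕ+ → ℝ) (hlam_pos : ∀ p, 0 < lam p) (hlam_mono : Monotone lam)
    (hlam_tendsto : Filter.Tendsto lam Filter.atTop Filter.atTop)
    (β a B K : ℝ) (hβ1 : 1 < β) (hβ2 : β < 2) (ha : 0 < a) (hB : 0 < B) (hK : 0 < K)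
    (c0 c1 : lp (fun _ : ℕ+ => ℝ) 2)
    (G : ℝ → lp (fun _ : ℕ+ => ℝ) 2 → lp (fun _ : ℕ+ => ℝ) 2)
    (hGcont : ContinuousOn (fun q : ℝ × lp (fun _ : ℕ+ => ℝ) 2 => G q.1 q.2)
      (Set.Icc (0 : ℝ) a ×ˢ Set.univ))
    (hGlip : ∀ t ∈ Set.Icc (0 : ℝ) a, ∀ v w : lp (fun _ : ℕ+ => ℝ) 2,
      ‖G t v - G t w‖ ≤ K * ‖v - w‖)
    (F : C(Set.Icc (0 : ℝ) a, lp (fun _ : ℕ+ => ℝ) 2) →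
         C(Set.Icc (0 : ℝ) a, lp (fun _ : ℕ+ => ℝ) 2))
    (hF : ∀ v : C(Set.Icc (0 : ℝ) a, lp (fun _ : ℕ+ => ℝ) 2),
      ∀ t : Set.Icc (0 : ℝ) a, ∀ p : ℕ+,
        (lam p ≤ B → F v t p =
          mittagLeffler β 1 (lam p * (t : ℝ) ^ β) * c0 p +
          (t : ℝ) * mittagLeffler β 2 (lam p * (t : ℝ) ^ β) * c1 p +
          ∫ η in (0 : ℝ)..(t : ℝ),
            ((t : ℝ) - η) ^ (β - 1) * mittagLeffler β β (lam p * ((t : ℝ) - η) ^ β) *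
              G η (v (Set.projIcc 0 a ha.le η)) p) ∧
        (B < lam p → F v t p = 0)) :
    ∃! u : C(Set.Icc (0 : ℝ) a, lp (fun _ : ℕ+ => ℝ) 2), F u = u := by
  have hfin : {p : ℕ+ | lam p ≤ B}.Finite := by
    obtain ⟨N, hN⟩ := (hlam_tendsto.eventually (Filter.eventually_gt_atTop B)).exists
    refine (Set.finite_Iic N).subset fun p hp => ?_
    by_contra hlt
    exact absurd (hN.trans_le (hlam_mono (not_le.1 hlt).le)) (not_lt.2 hp)
  choose M hM using fun p =>
    isCompact_Icc.exists_bound_of_continuousOn (continuousOn_kernel hβ1 (hlam_pos p) a)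
  have hM0 : ∀ p, 0 ≤ M p := fun p => (norm_nonneg _).trans (hM p 0 ⟨le_rfl, ha.le⟩)
  have hGc : ∀ v : C(Set.Icc (0 : ℝ) a, lp (fun _ : ℕ+ => ℝ) 2),
      ContinuousOn (fun η => G η (v (Set.projIcc 0 a ha.le η))) (Set.Icc 0 a) := by
    intro v
    refine hGcont.comp (f := fun η : ℝ => (η, v (Set.projIcc 0 a ha.le η)))
      (Continuous.continuousOn ?_) fun η hη => ⟨hη, trivial⟩
    exact continuous_id.prodMk (v.continuous.comp continuous_projIcc)
  refine existsUnique_fixedPoint_of_volterra ha (C := ∑ p ∈ hfin.toFinset, M p * K)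
    (Finset.sum_nonneg fun p _ => mul_nonneg (hM0 p) hK.le) F ?_
  intro u w t
  refine (lp_norm_le_sum_of_support _ hfin.toFinset fun p hp => ?_).trans ?_
  · have hp' : B < lam p := by simpa using hp
    simp [(hF u t p).2 hp', (hF w t p).2 hp']
  rw [Finset.sum_mul]
  refine Finset.sum_le_sum fun p hp => ?_
  have hp' : lam p ≤ B := by simpa using hp
  have hsub : Set.Icc (0 : ℝ) t ⊆ Set.Icc 0 a := Set.Icc_subset_Icc_right t.2.2
  have hker : ContinuousOn (fun η : ℝ => ((t : ℝ) - η) ^ (β - 1) *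
      mittagLeffler β β (lam p * ((t : ℝ) - η) ^ β)) (Set.Icc 0 (t : ℝ)) :=
    (continuousOn_kernel hβ1 (hlam_pos p) a).comp (f := fun η : ℝ => (t : ℝ) - η)
      (t := Set.Icc 0 a) (s := Set.Icc 0 (t : ℝ)) (by fun_prop) fun η hη =>
        ⟨by linarith [hη.2], by linarith [hη.1, t.2.2]⟩
  -- Without integrability for `u` and `w` separately, the difference of the two integrals need
  -- not be the integral of the difference.
  have hI : ∀ v : C(Set.Icc (0 : ℝ) a, lp (fun _ : ℕ+ => ℝ) 2),
      IntervalIntegrable (fun η : ℝ => ((t : ℝ) - η) ^ (β - 1) *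
        mittagLeffler β β (lam p * ((t : ℝ) - η) ^ β) *
          G η (v (Set.projIcc 0 a ha.le η)) p) volume 0 t := by
    intro v
    refine ContinuousOn.intervalIntegrable_of_Icc t.2.1 (hker.mul ?_)
    exact (lp.evalCLM ℝ (fun _ : ℕ+ => ℝ) 2 p).continuous.comp_continuousOn ((hGc v).mono hsub)
  have hdiff : (F u t - F w t) p = ∫ η in (0 : ℝ)..(t : ℝ),
      (((t : ℝ) - η) ^ (β - 1) * mittagLeffler β β (lam p * ((t : ℝ) - η) ^ β) *
          G η (u (Set.projIcc 0 a ha.le η)) p -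
        ((t : ℝ) - η) ^ (β - 1) * mittagLeffler β β (lam p * ((t : ℝ) - η) ^ β) *
          G η (w (Set.projIcc 0 a ha.le η)) p) := by
    rw [intervalIntegral.integral_sub (hI u) (hI w), lp.coeFn_sub, Pi.sub_apply,
      (hF u t p).1 hp', (hF w t p).1 hp']
    ring
  rw [hdiff, ← intervalIntegral.integral_const_mul]
  refine intervalIntegral.norm_integral_le_of_norm_le t.2.1
    (Filter.Eventually.of_forall fun η hη => ?_) ?_
  · have hηa : η ∈ Set.Icc 0 a := hsub ⟨hη.1.le, hη.2⟩
    rw [← mul_sub, norm_mul, mul_assoc]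
    refine mul_le_mul (hM p _ ⟨by linarith [hη.2], by linarith [hη.1, t.2.2]⟩) ?_
      (norm_nonneg _) (hM0 p)
    refine le_trans ?_ (hGlip η hηa _ _)
    rw [← Pi.sub_apply, ← lp.coeFn_sub]
    exact lp.norm_apply_le_norm (by norm_num) _ p
  · refine Continuous.intervalIntegrable ?_ _ _
    have hp : Continuous (Set.projIcc 0 a ha.le) := continuous_projIcc
    exact continuous_const.mul ((u.continuous.comp hp).sub (w.continuous.comp hp)).norm
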